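/- arXiv:1604.04981 — 3 statements merged into one kernel-verified Lean document; each statement's English description precedes it below -/
import Mathlib

section
/- Let P(z) = 1 + p_1 z + p_2 z^2 + ⋯ be a Carathéodory function such that p_1 is real and p_2 = p_1² − 2. Then P(z) = (1 − z²)/(1 − p_1 z + z²) for all z ∈ 𝔻. -/
/-!
Write `P z = 1 + z * Q z`, so that `Q 0 = p₁` and `Q' 0 = p₂`. The Cayley transform
`w = (P - 1) / (P + 1)` maps the disk into itself and fixes `0`, and `w z = z * φ z` with
`φ = Q / (P + 1)`; by the Schwarz lemma `‖φ‖ ≤ 1`. With `c = p₁ / 2`, which is real, one computes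
`φ 0 = c` and `φ' 0 = (2 p₂ - p₁²) / 4`, so the condition `p₂ = p₁² - 2` says precisely that
`φ' 0 = -(1 - c²)`: equality in the Schwarz–Pick inequality at the origin. Hence
`φ z = (c - z) / (1 - c z)` (`schwarz_pick_extremal`), and solving for `P` gives the formula.
-/


open Complex Metric

/-- The `n`-th Taylor coefficient of `f` at the origin. -/
noncomputable def taylorCoeff (f : ℂ → ℂ) (n : ℕ) : ℂ :=
  iteratedDeriv n f 0 / n.factorial

/-- `f` is a normalized convex univalent function on the unit disk:
analytic on `𝔻`, `f 0 = 0`, `f' 0 = 1`, injective on `𝔻`, and `f '' 𝔻` is convex. -/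
def IsConvexFun (f : ℂ → ℂ) : Prop :=
  DifferentiableOn ℂ f (ball (0:ℂ) 1) ∧ f 0 = 0 ∧ deriv f 0 = 1 ∧
    Set.InjOn f (ball (0:ℂ) 1) ∧ Convex ℝ (f '' ball (0:ℂ) 1)

/-- `P` is a Carathéodory function: analytic on `𝔻`, `P 0 = 1`, `Re P > 0` on `𝔻`. -/
def IsCara (P : ℂ → ℂ) : Prop :=
  DifferentiableOn ℂ P (ball (0:ℂ) 1) ∧ P 0 = 1 ∧ ∀ z ∈ ball (0:ℂ) 1, 0 < (P z).re

/-- Removing the constant term of a power series: the coefficients of `q` are the shifted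
coefficients of `f`. -/
lemma exists_shift {f : ℂ → ℂ} (hf : DifferentiableOn ℂ f (ball (0:ℂ) 1)) :
    ∃ q : ℂ → ℂ, DifferentiableOn ℂ q (ball (0:ℂ) 1) ∧ (∀ z, f z = f 0 + z * q z) ∧
      q 0 = taylorCoeff f 1 ∧ deriv q 0 = taylorCoeff f 2 := by
  have hb : ball (0:ℂ) 1 ∈ nhds (0:ℂ) := ball_mem_nhds _ one_pos
  have hq : DifferentiableOn ℂ (dslope f 0) (ball (0:ℂ) 1) :=
    (differentiableOn_dslope hb).2 hf
  have hfq : ∀ z, f z = f 0 + z * dslope f 0 z := by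
    intro z
    have := sub_smul_dslope f 0 z
    simp only [sub_zero, smul_eq_mul] at this
    rw [this]; ring
  refine ⟨dslope f 0, hq, hfq, ?_, ?_⟩
  · simp [taylorCoeff, iteratedDeriv_one]
  · have hd : deriv f =ᶠ[nhds 0] fun z => dslope f 0 z + z * deriv (dslope f 0) z := by
      filter_upwards [hb] with z hz
      have h1 := (hq.differentiableAt (isOpen_ball.mem_nhds hz)).hasDerivAt
      have h2 := ((hasDerivAt_id' z).fun_mul h1).const_add (f 0)
      rw [← funext hfq] at h2
      simpa using h2.deriv
    have h1 := (hq.differentiableAt hb).hasDerivAt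
    have h2 := ((hq.deriv isOpen_ball).differentiableAt hb).hasDerivAt
    have h3 := h1.add ((hasDerivAt_id (0:ℂ)).mul h2)
    have h4 : deriv (deriv f) 0 = 2 * deriv (dslope f 0) 0 := by
      rw [hd.deriv_eq]
      refine (HasDerivAt.deriv h3).trans ?_
      simp; ring
    simp [taylorCoeff, iteratedDeriv_succ, iteratedDeriv_zero, h4]

/-- The pseudo-hyperbolic distance between two points of the disk, one of them real, is less
than `1`. -/
lemma norm_sub_lt_of_real {a : ℝ} (ha : a ^ 2 < 1) {u : ℂ} (hu : ‖u‖ < 1) :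
    ‖u - a‖ < ‖1 - a * u‖ := by
  have h : ‖u‖ ^ 2 < 1 := by nlinarith [norm_nonneg u]
  refine lt_of_pow_lt_pow_left₀ 2 (norm_nonneg _) ?_
  rw [Complex.sq_norm, Complex.normSq_apply] at h ⊢
  rw [Complex.sq_norm, Complex.normSq_apply]
  simp
  nlinarith [mul_pos (sub_pos.2 ha) (sub_pos.2 h)]

/-- The equality case of the Schwarz–Pick inequality at the origin, with real value there and the
derivative equal to the negative extreme. For `a = ±1` the conclusion says that `φ` is constant. -/
lemma schwarz_pick_extremal {φ : ℂ → ℂ} {a : ℝ} (hφ : DifferentiableOn ℂ φ (ball (0:ℂ) 1))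
    (hle : ∀ z ∈ ball (0:ℂ) 1, ‖φ z‖ ≤ 1) (h0 : φ 0 = a) (h1 : deriv φ 0 = (a:ℂ) ^ 2 - 1) :
    ∀ z ∈ ball (0:ℂ) 1, φ z * (1 - a * z) = a - z := by
  have hb : ball (0:ℂ) 1 ∈ nhds (0:ℂ) := ball_mem_nhds _ one_pos
  have m0 : (0:ℂ) ∈ ball (0:ℂ) 1 := mem_ball_self one_pos
  by_cases hex : ∃ z₀ ∈ ball (0:ℂ) 1, ‖φ z₀‖ = 1
  · -- By the maximum principle `φ` is constant, so `φ' 0 = 0` and `a² = 1`.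
    obtain ⟨z₀, hz₀, hn⟩ := hex
    have hc := Complex.eqOn_of_isPreconnected_of_isMaxOn_norm
      (convex_ball (0:ℂ) 1).isPreconnected isOpen_ball hφ hz₀
      (fun z hz => by simpa [hn] using hle z hz)
    have hc' : ∀ z ∈ ball (0:ℂ) 1, φ z = a := fun z hz => by
      rw [← h0]; exact (hc hz).trans (hc m0).symm
    have hd : deriv φ 0 = 0 := by
      have : φ =ᶠ[nhds 0] fun _ => (a:ℂ) := by
        filter_upwards [hb] with z hz using hc' z hz
      rw [this.deriv_eq]; simp
    intro z hz
    rw [hc' z hz]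
    linear_combination z * (h1 - hd)
  · have hlt : ∀ z ∈ ball (0:ℂ) 1, ‖φ z‖ < 1 := fun z hz =>
      lt_of_le_of_ne (hle z hz) fun h => hex ⟨z, hz, h⟩
    have ha : a ^ 2 < 1 := by
      have := hlt 0 m0
      rw [h0, Complex.norm_real, Real.norm_eq_abs] at this
      exact (sq_lt_one_iff_abs_lt_one a).2 this
    have hk := fun z hz => norm_sub_lt_of_real ha (hlt z hz)
    have hne : ∀ z ∈ ball (0:ℂ) 1, 1 - a * φ z ≠ 0 := fun z hz =>
      norm_pos_iff.1 ((norm_nonneg _).trans_lt (hk z hz))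
    -- Moving `φ 0` to the origin by a disk automorphism gives a self-map `g` of the disk with
    -- `g 0 = 0` and `g' 0 = -1`, to which the equality case of the Schwarz lemma applies.
    set g : ℂ → ℂ := fun z => (φ z - a) / (1 - a * φ z) with hg
    have hgd : DifferentiableOn ℂ g (ball (0:ℂ) 1) :=
      (hφ.sub_const _).div ((hφ.const_mul _).const_sub _) hne
    have hg0 : g 0 = 0 := by simp [hg, h0]
    have hmaps : Set.MapsTo g (ball (0:ℂ) 1) (ball (g 0) 1) := fun z hz => by
      rw [hg0, mem_ball_zero_iff, norm_div, div_lt_one (norm_pos_iff.2 (hne z hz))]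
      exact hk z hz
    have hne0 : (1:ℂ) - a * a ≠ 0 := by simpa [h0] using hne 0 m0
    have hgder : deriv g 0 = -1 := by
      have hp := (hφ.differentiableAt hb).hasDerivAt
      have hq := (hp.sub_const (a:ℂ)).div ((hp.const_mul (a:ℂ)).const_sub 1) (hne 0 m0)
      refine hq.deriv.trans ?_
      rw [h0, h1, div_eq_iff (pow_ne_zero 2 hne0)]
      ring
    have haff := affine_of_mapsTo_ball_of_norm_dslope_eq_div (z₀ := 0) hgd
      (hmaps.mono_right ball_subset_closedBall) m0 (by simp [hgder])
    intro z hz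
    have h := haff hz
    simp only [dslope_same, hgder, hg0] at h
    rw [hg, div_eq_iff (hne z hz)] at h
    simp only [sub_zero, zero_add, smul_eq_mul] at h
    linear_combination h

theorem cara_form (P : ℂ → ℂ) (hP : IsCara P)
    (h1 : (taylorCoeff P 1).im = 0)
    (h2 : taylorCoeff P 2 = (taylorCoeff P 1) ^ 2 - 2) :
    ∀ z ∈ ball (0:ℂ) 1,
      P z = (1 - z ^ 2) / (1 - taylorCoeff P 1 * z + z ^ 2) := by
  obtain ⟨hd, hP0, hre⟩ := hP
  have hb : ball (0:ℂ) 1 ∈ nhds (0:ℂ) := ball_mem_nhds _ one_pos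
  have m0 : (0:ℂ) ∈ ball (0:ℂ) 1 := mem_ball_self one_pos
  obtain ⟨Q, hQ, hPQ, hQ0, hQ1⟩ := exists_shift hd
  obtain ⟨a, ha⟩ : ∃ a : ℝ, taylorCoeff P 1 = 2 * a :=
    ⟨(taylorCoeff P 1).re / 2, by apply Complex.ext <;> simp [h1]; ring⟩
  rw [hP0] at hPQ
  rw [ha] at h2 hQ0 ⊢
  rw [h2] at hQ1
  have hne : ∀ z ∈ ball (0:ℂ) 1, P z + 1 ≠ 0 := fun z hz h => by
    have := congrArg Complex.re h
    simp at this
    linarith [hre z hz]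
  set φ : ℂ → ℂ := fun z => Q z / (P z + 1) with hφ
  set w : ℂ → ℂ := fun z => (P z - 1) / (P z + 1) with hw
  have hφd : DifferentiableOn ℂ φ (ball (0:ℂ) 1) := hQ.div (hd.add_const _) hne
  have hwd : DifferentiableOn ℂ w (ball (0:ℂ) 1) :=
    (hd.sub_const _).div (hd.add_const _) hne
  have hwφ : w = fun z => z * φ z := by
    funext z
    simp only [hw, hφ]
    rw [hPQ z]; ring
  have hw0 : w 0 = 0 := by simp [hw, hP0]
  have hmaps : Set.MapsTo w (ball (0:ℂ) 1) (ball (w 0) 1) := fun z hz => by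
    rw [hw0, mem_ball_zero_iff, norm_div, div_lt_one (norm_pos_iff.2 (hne z hz))]
    refine lt_of_pow_lt_pow_left₀ 2 (norm_nonneg _) ?_
    rw [Complex.sq_norm, Complex.normSq_apply, Complex.sq_norm, Complex.normSq_apply]
    simp
    nlinarith [hre z hz]
  have hle : ∀ z ∈ ball (0:ℂ) 1, ‖φ z‖ ≤ 1 := fun z hz => by
    have h := norm_dslope_le_div_of_mapsTo_ball hwd
      (hmaps.mono_right ball_subset_closedBall) hz
    have e : dslope w 0 z = φ z := by
      rcases eq_or_ne z 0 with rfl | hz0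
      · have := ((hasDerivAt_id (0:ℂ)).mul (hφd.differentiableAt hb).hasDerivAt)
        rw [dslope_same, hwφ]
        refine this.deriv.trans ?_
        simp
      · rw [dslope_of_ne _ hz0, slope_def_field, hw0, hwφ]
        simp [hz0]
    rw [e] at h
    simpa using h
  have hφ0 : φ 0 = a := by simp only [hφ, hQ0, hP0]; ring
  have hφ1 : deriv φ 0 = (a:ℂ) ^ 2 - 1 := by
    have hPd := (hd.differentiableAt hb).hasDerivAt
    have hP1 : deriv P 0 = 2 * a := by
      rw [← ha]; simp [taylorCoeff, iteratedDeriv_one]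
    have h := (hQ.differentiableAt hb).hasDerivAt.div (hPd.add_const (1:ℂ)) (hne 0 m0)
    refine h.deriv.trans ?_
    rw [hQ1, hQ0, hP0, hP1]
    ring
  intro z hz
  have key := schwarz_pick_extremal hφd hle hφ0 hφ1 z hz
  have hφz : φ z * (P z + 1) = Q z := div_mul_cancel₀ _ (hne z hz)
  have hmul : P z * (1 - 2 * a * z + z ^ 2) = 1 - z ^ 2 := by
    linear_combination (1 - a * z) * (hPQ z) - z * (1 - a * z) * hφz + z * (P z + 1) * key
  -- A zero of the denominator would satisfy `z² = 1`.
  have hden : 1 - 2 * a * z + z ^ 2 ≠ 0 := fun h => by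
    rw [h, mul_zero] at hmul
    have hz2 : z ^ 2 = 1 := by linear_combination hmul
    have hn := congrArg norm hz2
    rw [norm_pow, norm_one] at hn
    have hz' := mem_ball_zero_iff.1 hz
    nlinarith [norm_nonneg z]
  exact eq_div_of_mul_eq hden hmul
end

section
/- Let P(t) = α_P + 2β_P t + γ_P t² and Q(t) = α_Q + 2β_Q t + γ_Q t² be (possibly degenerate) real quadratic polynomials with discriminants Δ_P = β_P² − α_P γ_P and Δ_Q = β_Q² − α_Q γ_Q. Suppose P > 0 and Q > 0 on an interval I ⊂ ℝ, Δ_P > 0, and there is a constant T > 0 with Δ_Q ≥ T^{3/2} Δ_P and T·P(t) ≥ Q(t) for all t ∈ I. Then G(t) = √(P(t)) − √(Q(t)) is convex on I. -/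
/-!
If `P(t) = α + 2βt + γt²` is positive near `t` and `Δ = β² - αγ`, then `(√P)'' = -Δ / P^{3/2}`;
the variable `t` enters the second derivative only through `P`. Hence
`G'' = Δ_Q / Q^{3/2} - Δ_P / P^{3/2}`, and `Q ≤ T P` together with `T^{3/2} Δ_P ≤ Δ_Q` gives
`Δ_P Q^{3/2} ≤ Δ_P T^{3/2} P^{3/2} ≤ Δ_Q P^{3/2}`, so `G'' ≥ 0` on the interior of `I`.
-/

theorem hasDerivAt_quadratic (α β γ t : ℝ) :
    HasDerivAt (fun t : ℝ => α + 2 * β * t + γ * t ^ 2) (2 * (β + γ * t)) t := by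
  have h1 := ((hasDerivAt_id t).const_mul (2 * β)).const_add α
  have h2 := ((hasDerivAt_id t).pow 2).const_mul γ
  refine (h1.add h2).congr_deriv ?_
  simp
  ring

theorem hasDerivAt_sqrt_quadratic {α β γ t : ℝ} (h : 0 < α + 2 * β * t + γ * t ^ 2) :
    HasDerivAt (fun t : ℝ => √(α + 2 * β * t + γ * t ^ 2))
      ((β + γ * t) / √(α + 2 * β * t + γ * t ^ 2)) t := by
  refine ((hasDerivAt_quadratic α β γ t).sqrt h.ne').congr_deriv ?_
  rw [mul_div_mul_left _ _ two_ne_zero]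

/-- The second derivative of `√P` is `-Δ / P^{3/2}`, with `P^{3/2}` written as `√P ^ 3`. -/
theorem hasDerivAt_deriv_sqrt_quadratic {α β γ t : ℝ} (h : 0 < α + 2 * β * t + γ * t ^ 2) :
    HasDerivAt (fun t : ℝ => (β + γ * t) / √(α + 2 * β * t + γ * t ^ 2))
      (-(β ^ 2 - α * γ) / √(α + 2 * β * t + γ * t ^ 2) ^ 3) t := by
  have hs : 0 < √(α + 2 * β * t + γ * t ^ 2) := Real.sqrt_pos.2 h
  have h1 := ((hasDerivAt_id t).const_mul γ).const_add β
  refine (h1.div (hasDerivAt_sqrt_quadratic h) hs.ne').congr_deriv ?_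
  have hsq := Real.sq_sqrt h.le
  set s := √(α + 2 * β * t + γ * t ^ 2)
  simp only [id]
  field_simp
  rw [hsq]
  ring

theorem sqrt_diff_convex (αP βP γP αQ βQ γQ T : ℝ) (I : Set ℝ) (hI : Convex ℝ I)
    (hP : ∀ t ∈ I, 0 < αP + 2 * βP * t + γP * t ^ 2)
    (hQ : ∀ t ∈ I, 0 < αQ + 2 * βQ * t + γQ * t ^ 2)
    (hΔP : 0 < βP ^ 2 - αP * γP) (hT : 0 < T)
    (hΔ : T ^ ((3 : ℝ) / 2) * (βP ^ 2 - αP * γP) ≤ βQ ^ 2 - αQ * γQ)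
    (hTP : ∀ t ∈ I, αQ + 2 * βQ * t + γQ * t ^ 2 ≤ T * (αP + 2 * βP * t + γP * t ^ 2)) :
    ConvexOn ℝ I (fun t =>
      Real.sqrt (αP + 2 * βP * t + γP * t ^ 2) -
        Real.sqrt (αQ + 2 * βQ * t + γQ * t ^ 2)) := by
  have hTs : T ^ ((3 : ℝ) / 2) = √T ^ 3 := by
    rw [Real.sqrt_eq_rpow, ← Real.rpow_natCast, ← Real.rpow_mul hT.le]
    norm_num
  rw [hTs] at hΔ
  refine convexOn_of_hasDerivWithinAt2_nonneg hI (by fun_prop)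
    (fun t ht => ((hasDerivAt_sqrt_quadratic (hP t (interior_subset ht))).sub
      (hasDerivAt_sqrt_quadratic (hQ t (interior_subset ht)))).hasDerivWithinAt)
    (fun t ht => ((hasDerivAt_deriv_sqrt_quadratic (hP t (interior_subset ht))).sub
      (hasDerivAt_deriv_sqrt_quadratic (hQ t (interior_subset ht)))).hasDerivWithinAt)
    (fun t ht => ?_)
  have htI := interior_subset ht
  have hp := Real.sqrt_pos.2 (hP t htI)
  have hq := Real.sqrt_pos.2 (hQ t htI)
  have hle := Real.sqrt_le_sqrt (hTP t htI)
  rw [Real.sqrt_mul hT.le] at hle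
  set p := √(αP + 2 * βP * t + γP * t ^ 2)
  set q := √(αQ + 2 * βQ * t + γQ * t ^ 2)
  rw [neg_div, neg_div, sub_neg_eq_add, neg_add_eq_sub, sub_nonneg,
    div_le_div_iff₀ (pow_pos hp 3) (pow_pos hq 3)]
  calc (βP ^ 2 - αP * γP) * q ^ 3 ≤ (βP ^ 2 - αP * γP) * (√T * p) ^ 3 := by gcongr
    _ = √T ^ 3 * (βP ^ 2 - αP * γP) * p ^ 3 := by ring
    _ ≤ (βQ ^ 2 - αQ * γQ) * p ^ 3 := by gcongr
end

section
/- For every integer n ≥ 4 there exists φ ∈ ℝ with sin φ ≠ 0 such that |sin(nφ)/(n sin φ)| − |sin((n+1)φ)/((n+1) sin φ)| > 1/n. -/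
/-!
At `φ₀ = π / (n + 1)` the difference equals exactly `1 / n`, so the point is moved slightly to the
left, to `φ = φ₀ - h` with `h > 0` small. All sines involved are positive there, and the claim
becomes `sin (φ₀ - h) < sin (φ₀ + n h) - n / (n + 1) * sin ((n + 1) h)`. By sum-to-product and the
double-angle formula, dividing by `2 sin ((n + 1) h / 2)` reduces this to
`n / (n + 1) * cos ((n + 1) h / 2) < cos (φ₀ + (n - 1) h / 2)`. By continuity it is enough that
`n / (n + 1) < cos φ₀`, and this follows from `1 - φ₀² / 2 ≤ cos φ₀` because
`π² / 2 < 5 ≤ n + 1`.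
-/

lemma div_lt_cos_pi_div (x : ℝ) (hx : 4 ≤ x) : x / (x + 1) < Real.cos (Real.pi / (x + 1)) := by
  have h1 := Real.one_sub_sq_div_two_le_cos (x := Real.pi / (x + 1))
  have hpi : Real.pi ^ 2 < 10 := by nlinarith [Real.pi_lt_d2, Real.pi_pos]
  refine lt_of_lt_of_le ?_ h1
  have h2 : 1 - (Real.pi / (x + 1)) ^ 2 / 2 - x / (x + 1)
      = (2 * (x + 1) - Real.pi ^ 2) / (2 * (x + 1) ^ 2) := by
    field_simp
    ring
  have h3 : 0 < (2 * (x + 1) - Real.pi ^ 2) / (2 * (x + 1) ^ 2) :=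
    div_pos (by linarith) (by positivity)
  linarith

theorem Psi_gt (n : ℕ) (hn : 4 ≤ n) :
    ∃ φ : ℝ, Real.sin φ ≠ 0 ∧
      1 / (n : ℝ) <
        |Real.sin (n * φ) / (n * Real.sin φ)| -
          |Real.sin ((n + 1) * φ) / ((n + 1) * Real.sin φ)| := by
  have hx : (4 : ℝ) ≤ n := by exact_mod_cast hn
  generalize (n : ℝ) = x at hx ⊢
  have hx1 : 0 < x + 1 := by linarith
  set p := Real.pi / (x + 1) with hp
  have hp0 : 0 < p := div_pos Real.pi_pos hx1
  have hpx : (x + 1) * p = Real.pi := by rw [hp]; field_simp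
  obtain ⟨h, ⟨hcos, hhp⟩, hh0⟩ : ∃ h : ℝ,
      (x / (x + 1) < Real.cos (p + (x - 1) * h / 2) ∧ h < p) ∧ 0 < h := by
    have hc : Filter.Tendsto (fun h : ℝ => Real.cos (p + (x - 1) * h / 2)) (nhds 0)
        (nhds (Real.cos p)) := by
      have : Continuous (fun h : ℝ => Real.cos (p + (x - 1) * h / 2)) := by fun_prop
      simpa using this.tendsto 0
    have h1 := (hc.eventually_const_lt (div_lt_cos_pi_div x hx)).and (eventually_lt_nhds hp0)
    exact ((h1.filter_mono nhdsWithin_le_nhds).and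
      (self_mem_nhdsWithin : Set.Ioi (0 : ℝ) ∈ nhdsWithin 0 (Set.Ioi 0))).exists
  have hhpi : (x + 1) * h < Real.pi := by rw [← hpx]; gcongr
  have hs : 0 < Real.sin (p - h) :=
    Real.sin_pos_of_pos_of_lt_pi (by linarith) (by nlinarith)
  have hS : 0 < Real.sin ((x + 1) * h) :=
    Real.sin_pos_of_pos_of_lt_pi (by positivity) hhpi
  have hS2 : 0 < Real.sin ((x + 1) * h / 2) :=
    Real.sin_pos_of_pos_of_lt_pi (by positivity) (by linarith [Real.pi_pos])
  have e1 : Real.sin (x * (p - h)) = Real.sin (p + x * h) := by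
    rw [← Real.sin_pi_sub, ← hpx]; ring_nf
  have e2 : Real.sin ((x + 1) * (p - h)) = Real.sin ((x + 1) * h) := by
    rw [← Real.sin_pi_sub, ← hpx]; ring_nf
  have e3 : Real.sin (p + x * h) - Real.sin (p - h)
      = 2 * Real.sin ((x + 1) * h / 2) * Real.cos (p + (x - 1) * h / 2) := by
    rw [Real.sin_sub_sin]; ring_nf
  have e4 : Real.sin ((x + 1) * h)
      = 2 * Real.sin ((x + 1) * h / 2) * Real.cos ((x + 1) * h / 2) := by
    rw [← Real.sin_two_mul]; ring_nf
  have key : x / (x + 1) * Real.sin ((x + 1) * h)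
      < Real.sin (p + x * h) - Real.sin (p - h) := by
    rw [e3, e4]
    have hq : x / (x + 1) * Real.cos ((x + 1) * h / 2) ≤ x / (x + 1) :=
      mul_le_of_le_one_right (by positivity) (Real.cos_le_one _)
    nlinarith
  refine ⟨p - h, hs.ne', ?_⟩
  rw [e1, e2, abs_of_pos (div_pos hS (mul_pos hx1 hs))]
  refine lt_of_lt_of_le ?_ (sub_le_sub_right (le_abs_self _) _)
  have e5 : Real.sin (p + x * h) / (x * Real.sin (p - h))
        - Real.sin ((x + 1) * h) / ((x + 1) * Real.sin (p - h)) - 1 / x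
      = (Real.sin (p + x * h) - Real.sin (p - h) - x / (x + 1) * Real.sin ((x + 1) * h))
        / (x * Real.sin (p - h)) := by
    have := hs.ne'
    field_simp
    ring
  have h6 : 0 < (Real.sin (p + x * h) - Real.sin (p - h)
      - x / (x + 1) * Real.sin ((x + 1) * h)) / (x * Real.sin (p - h)) :=
    div_pos (by linarith) (mul_pos (by linarith) hs)
  linarith
end
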